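/- arXiv:1201.1073 — 4 statements merged into one kernel-verified Lean document; each statement's English description precedes it below -/
import Mathlib

section
/- Let Ω be a non-empty closed discrete subset of ℂ which is stable under addition, with 0 ∉ Ω. Let δ, δ′ > 0 with δ′ < δ/2, let J = [a,b] be a compact interval, and let γ : J → ℂ be a piecewise C¹ path with 0 ∉ γ(J) and γ(J) ⊂ ℂ∖Ω_δ. Suppose h : [0,1] → ℂ is a C¹ path with h(0) = 0, h([0,1]) ⊂ ℂ∖Ω_{δ′}, h(1−s) = h(1) − h(s) for all s ∈ [0,1], and h(1) = γ(a). Then there exists a symmetric Ω-homotopy H on [0,1] × J whose initial path is h, whose endpoint path is γ, whose image H([0,1]×J) is contained in ℂ∖Ω_{δ′}, and whose final path H_b is C¹. -/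
open Set Metric Filter Topology intervalIntegral

noncomputable section

/-- A path `γ : [a,b] → ℂ` which is piecewise `C¹`. -/
def PiecewiseC1On (γ : ℝ → ℂ) (a b : ℝ) : Prop :=
  ContinuousOn γ (Set.Icc a b) ∧
  ∃ (n : ℕ) (u : ℕ → ℝ), u 0 = a ∧ u n = b ∧ (∀ i < n, u i ≤ u (i + 1)) ∧
    ∀ i < n, ContDiffOn ℝ 1 γ (Set.Icc (u i) (u (i + 1)))

/-- The germ at `γ a` of the function `f` admits analytic continuation along
`γ` restricted to `[a,b]`, resulting in the germ of `g` at `γ b`.  This is the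
usual definition via a family of analytic elements `(F t, r t)` along the path
which are locally compatible. -/
def ContAlong (f : ℂ → ℂ) (γ : ℝ → ℂ) (a b : ℝ) (g : ℂ → ℂ) : Prop :=
  ∃ (F : ℝ → ℂ → ℂ) (r : ℝ → ℝ),
    (∀ t ∈ Set.Icc a b, 0 < r t ∧ AnalyticOnNhd ℂ (F t) (Metric.ball (γ t) (r t))) ∧
    (∀ t ∈ Set.Icc a b, ∃ ε > 0, ∀ t' ∈ Set.Icc a b, |t' - t| < ε →
      Set.EqOn (F t) (F t') (Metric.ball (γ t) (r t) ∩ Metric.ball (γ t') (r t'))) ∧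
    (∀ᶠ z in 𝓝 (γ a), F a z = f z) ∧
    (∀ᶠ z in 𝓝 (γ b), F b z = g z)

/-- The germ of `f` at `γ a` admits analytic continuation along `γ|[a,b]`. -/
def ContinuableAlong (f : ℂ → ℂ) (γ : ℝ → ℂ) (a b : ℝ) : Prop :=
  ∃ g, ContAlong f γ a b g

/-- `f` is an `Ω`-continuable holomorphic germ at `0`: it is holomorphic on some
disc `D_R` with `D_R∖{0}` disjoint from `Ω`, and admits analytic continuation
along every (piecewise `C¹`) path of `ℂ∖Ω` originating from any point of `D_R∖{0}`. -/
def OmegaCont (Ω : Set ℂ) (f : ℂ → ℂ) : Prop :=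
  ∃ R > 0, AnalyticOnNhd ℂ f (Metric.ball 0 R) ∧
    (∀ ζ ∈ Metric.ball (0:ℂ) R, ζ ≠ 0 → ζ ∉ Ω) ∧
    ∀ γ : ℝ → ℂ, PiecewiseC1On γ 0 1 → γ 0 ∈ Metric.ball (0:ℂ) R → γ 0 ≠ 0 →
      (∀ t ∈ Set.Icc (0:ℝ) 1, γ t ∉ Ω) → ContinuableAlong f γ 0 1

/-- Convolution of two germs: `(f ⋆ g)(ζ) = ∫₀^ζ f(ξ) g(ζ-ξ) dξ`, the integral
being taken over the line segment from `0` to `ζ`. -/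
def conv (f g : ℂ → ℂ) (ζ : ℂ) : ℂ :=
  ζ * ∫ t in (0:ℝ)..1, f ((t : ℂ) * ζ) * g ((1 - (t : ℂ)) * ζ)

/-- A symmetric `Ω`-homotopy on `[0,1] × [a,b]`: a continuous map such that each
path `H_t = H ( · , t)` is piecewise `C¹`, starts at `0`, avoids `Ω` on `(0,1]`,
and is symmetric with respect to its midpoint: `H_t(1) - H_t(s) = H_t(1-s)`. -/
def SymmOmegaHomotopy (Ω : Set ℂ) (H : ℝ → ℝ → ℂ) (a b : ℝ) : Prop :=
  ContinuousOn (fun p : ℝ × ℝ => H p.1 p.2) (Set.Icc 0 1 ×ˢ Set.Icc a b) ∧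
  ∀ t ∈ Set.Icc a b,
    PiecewiseC1On (fun s => H s t) 0 1 ∧
    H 0 t = 0 ∧
    (∀ s ∈ Set.Ioc (0:ℝ) 1, H s t ∉ Ω) ∧
    (∀ s ∈ Set.Icc (0:ℝ) 1, H 1 t - H s t = H (1 - s) t)

/-!
Fix a symmetric path `p` from `0` to `z = γ c`. Since `Ω + Ω ⊆ Ω`, the distance to `Ω` is
subadditive, so `p s + p (1 - s) = z` and `infDist z Ω ≥ δ > 2δ'` prevent `p s` and `p (1 - s)`
from being both within distance about `δ'` of `Ω`. The closed set of times at which `p` is too close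
is therefore disjoint from its mirror image, and a smooth weight `χ` with `χ s + χ (1 - s) = 1` can
be chosen to vanish on it. Moving `p` to `s ↦ p s + χ s • (γ t - γ c)` then keeps it symmetric,
ends it at `γ t`, and displaces only points that have room to move. By uniform continuity of `γ`,
finitely many such steps cover `[a, b]`.
-/

theorem induction_of_le_add_step {α : Type*} [AddCommGroup α] [LinearOrder α]
    [IsOrderedAddMonoid α] [Archimedean α] {P : α → Prop} {a b ε : α} (hab : a ≤ b) (hε : 0 < ε)
    (base : P a) (step : ∀ c ∈ Icc a b, ∀ d ∈ Icc c b, d ≤ c + ε → P c → P d) : P b := by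
  have hP : ∀ k : ℕ, P (min (a + k • ε) b) := by
    intro k
    induction k with
    | zero => simpa only [zero_nsmul, add_zero, min_eq_left hab] using base
    | succ k ih =>
      refine step _ ⟨le_min (le_add_of_nonneg_right (nsmul_nonneg hε.le k)) hab, min_le_right _ _⟩
        _ ⟨?_, min_le_right _ _⟩ ?_ ih
      · gcongr
        exact k.le_succ
      · rw [← min_add_add_right, succ_nsmul, add_assoc]
        exact min_le_min_left _ (le_add_of_nonneg_right hε.le)
  obtain ⟨k, hk⟩ := Archimedean.arch (b - a) hε
  simpa only [min_eq_right (sub_le_iff_le_add'.1 hk)] using hP k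

section InfDist

open scoped Pointwise

variable {E : Type*} [SeminormedAddCommGroup E]

theorem infDist_add_add_le {s t : Set E} (hs : s.Nonempty) (ht : t.Nonempty) (x y : E) :
    infDist (x + y) (s + t) ≤ infDist x s + infDist y t := by
  refine le_of_forall_pos_le_add fun ε hε ↦ ?_
  obtain ⟨u, hu, hxu⟩ := (infDist_lt_iff hs).1 (lt_add_of_pos_right (infDist x s) (half_pos hε))
  obtain ⟨v, hv, hyv⟩ := (infDist_lt_iff ht).1 (lt_add_of_pos_right (infDist y t) (half_pos hε))
  calc
    infDist (x + y) (s + t) ≤ dist (x + y) (u + v) := infDist_le_dist_of_mem (add_mem_add hu hv)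
    _ ≤ dist x u + dist y v := dist_add_add_le x y u v
    _ ≤ infDist x s + infDist y t + ε := by linarith

theorem infDist_add_le_of_add_subset {Ω : Set E} (hΩ : Ω + Ω ⊆ Ω) (x y : E) :
    infDist (x + y) Ω ≤ infDist x Ω + infDist y Ω := by
  rcases Ω.eq_empty_or_nonempty with rfl | hne
  · simp only [infDist_empty, add_zero, le_refl]
  · exact (infDist_le_infDist_of_subset hΩ (hne.add hne)).trans (infDist_add_add_le hne hne x y)

theorem le_infDist_add_smul [NormedSpace ℝ E] {Ω : Set E} {δ ρ θ : ℝ} {x v : E}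
    (hθ : θ ∈ Icc (0 : ℝ) 1) (hv : ‖v‖ ≤ ρ) (hx : δ ≤ infDist x Ω)
    (hθx : infDist x Ω ≤ δ + ρ → θ = 0) : δ ≤ infDist (x + θ • v) Ω := by
  rcases le_or_gt (infDist x Ω) (δ + ρ) with hclose | hfar
  · simpa only [hθx hclose, zero_smul, add_zero] using hx
  · have hmove : dist x (x + θ • v) ≤ ρ := by
      rw [dist_self_add_right, norm_smul, Real.norm_of_nonneg hθ.1]
      exact (mul_le_of_le_one_left (norm_nonneg v) hθ.2).trans hv
    linarith [infDist_le_infDist_add_dist (s := Ω) (x := x) (y := x + θ • v)]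

end InfDist

theorem exists_contDiff_add_reflection_eq_one {V : Type*} [NormedAddCommGroup V] [NormedSpace ℝ V]
    [FiniteDimensional ℝ V] (n : ℕ∞) {A : Set V} (hA : IsClosed A) {c : V}
    (hAc : ∀ x ∈ A, c - x ∉ A) :
    ∃ χ : V → ℝ, ContDiff ℝ n χ ∧ (∀ x, χ x ∈ Icc (0 : ℝ) 1) ∧ (∀ x, χ x + χ (c - x) = 1) ∧
      EqOn χ 0 A := by
  have hrefl : IsClosed ((c - ·) ⁻¹' A) := hA.preimage (continuous_sub_left c)
  obtain ⟨f, hf0, hf1, hf⟩ := exists_contMDiffMap_zero_one_of_isClosed (n := n)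
    (modelWithCornersSelf ℝ V) hA hrefl (Set.disjoint_left.2 hAc)
  have hfC : ContDiff ℝ n f := f.contMDiff.contDiff
  refine ⟨fun x ↦ (f x + (1 - f (c - x))) / 2, ?_, fun x ↦ ?_, fun x ↦ ?_, fun x hx ↦ ?_⟩
  · exact (hfC.add (contDiff_const.sub (hfC.comp (contDiff_const.sub contDiff_id)))).div_const 2
  · constructor <;> linarith [(hf x).1, (hf x).2, (hf (c - x)).1, (hf (c - x)).2]
  · simp only [sub_sub_cancel]
    ring
  · have hcx : f (c - x) = 1 := hf1 (by simpa only [mem_preimage, sub_sub_cancel] using hx)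
    simp [hf0 hx, hcx]

section SymmPath

variable {E : Type*} [NormedAddCommGroup E] [NormedSpace ℝ E]

/-- A `Cⁿ` path on `[0,1]` from `0` to `z` that is symmetric with respect to its midpoint `z / 2`.
The endpoint condition `p 1 = z` is not a field, being `symm` at `s = 0`. -/
structure IsSymmPath (n : ℕ∞) (z : E) (p : ℝ → E) : Prop where
  contDiffOn : ContDiffOn ℝ n p (Icc 0 1)
  map_zero : p 0 = 0
  symm : ∀ s ∈ Icc (0 : ℝ) 1, p s + p (1 - s) = z

namespace IsSymmPath

variable {n : ℕ∞} {z : E} {p : ℝ → E}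

theorem map_one (hp : IsSymmPath n z p) : p 1 = z := by
  simpa only [hp.map_zero, sub_zero, zero_add] using hp.symm 0 unitInterval.zero_mem

theorem add_smul {χ : ℝ → ℝ} (hp : IsSymmPath n z p) (hχ : IsSymmPath n 1 χ) (v : E) :
    IsSymmPath n (z + v) (fun s ↦ p s + χ s • v) where
  contDiffOn := hp.contDiffOn.add (hχ.contDiffOn.smul contDiffOn_const)
  map_zero := by rw [hp.map_zero, hχ.map_zero, zero_smul, add_zero]
  symm s hs := by rw [add_add_add_comm, hp.symm s hs, ← _root_.add_smul, hχ.symm s hs, one_smul]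

open scoped Pointwise in
theorem exists_weight {Ω : Set E} (hΩ : Ω + Ω ⊆ Ω) {κ : ℝ} (hz : 0 < infDist z Ω)
    (hκ : 2 * κ < infDist z Ω) (hp : IsSymmPath n z p) :
    ∃ χ : ℝ → ℝ, IsSymmPath n 1 χ ∧ (∀ s, χ s ∈ Icc (0 : ℝ) 1) ∧
      ∀ s ∈ Icc (0 : ℝ) 1, infDist (p s) Ω ≤ κ → χ s = 0 := by
  let C : Set ℝ := {s ∈ Icc 0 1 | infDist (p s) Ω ≤ κ}
  have hC : IsClosed C := isClosed_Icc.isClosed_le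
    ((continuous_infDist_pt Ω).comp_continuousOn hp.contDiffOn.continuousOn) continuousOn_const
  have hfar : κ < infDist (p 1) Ω := by rw [hp.map_one]; linarith
  -- Time `0` is added by hand: `0` may be far from `Ω`, but the origin of the path must not move.
  have hdisj : ∀ s ∈ insert 0 C, 1 - s ∉ insert 0 C := by
    rintro s (rfl | ⟨hs, hsκ⟩) (hs' | ⟨-, hsκ'⟩)
    · exact one_ne_zero ((sub_zero 1).symm.trans hs')
    · rw [sub_zero] at hsκ'
      exact hfar.not_ge hsκ'
    · rw [← sub_eq_zero.1 hs'] at hsκ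
      exact hfar.not_ge hsκ
    · have hsum := infDist_add_le_of_add_subset hΩ (p s) (p (1 - s))
      rw [hp.symm s hs] at hsum
      linarith
  obtain ⟨χ, hχC, hχ01, hχsymm, hχ0⟩ :=
    exists_contDiff_add_reflection_eq_one n (isClosed_singleton.union hC) hdisj
  exact ⟨χ, ⟨hχC.contDiffOn, hχ0 (.inl rfl), fun s _ ↦ hχsymm s⟩, hχ01,
    fun s hs hsκ ↦ hχ0 (.inr ⟨hs, hsκ⟩)⟩

end IsSymmPath

/-- A homotopy over `[a,b]` of symmetric `Cⁿ` paths, starting at the path `h`, whose paths end on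
`γ` and stay at distance at least `δ` from `Ω`. -/
structure IsSymmHomotopy (n : ℕ∞) (Ω : Set E) (δ : ℝ) (γ h : ℝ → E) (a b : ℝ)
    (H : ℝ → ℝ → E) : Prop where
  continuousOn : ContinuousOn (fun q : ℝ × ℝ ↦ H q.1 q.2) (Icc 0 1 ×ˢ Icc a b)
  initial : ∀ s, H s a = h s
  isSymmPath : ∀ t ∈ Icc a b, IsSymmPath n (γ t) (H · t)
  le_infDist : ∀ s ∈ Icc (0 : ℝ) 1, ∀ t ∈ Icc a b, δ ≤ infDist (H s t) Ω

namespace IsSymmHomotopy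

variable {n : ℕ∞} {Ω : Set E} {δ ρ a c d : ℝ} {γ h : ℝ → E} {H : ℝ → ℝ → E}

theorem map_one {b t : ℝ} (hH : IsSymmHomotopy n Ω δ γ h a b H) (ht : t ∈ Icc a b) :
    H 1 t = γ t :=
  (hH.isSymmPath t ht).map_one

theorem const (hh : IsSymmPath n (γ a) h) (hhΩ : ∀ s ∈ Icc (0 : ℝ) 1, δ ≤ infDist (h s) Ω) :
    IsSymmHomotopy n Ω δ γ h a a (fun s _ ↦ h s) where
  continuousOn := hh.contDiffOn.continuousOn.comp continuousOn_fst fun _ hq ↦ hq.1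
  initial _ := rfl
  isSymmPath t ht := by rwa [le_antisymm ht.2 ht.1]
  le_infDist s hs _ _ := hhΩ s hs

theorem extend (hac : a ≤ c) (hcd : c ≤ d) (hγ : ContinuousOn γ (Icc c d))
    (hγρ : ∀ t ∈ Icc c d, dist (γ t) (γ c) ≤ ρ) (hH : IsSymmHomotopy n Ω δ γ h a c H)
    {χ : ℝ → ℝ} (hχ : IsSymmPath n 1 χ) (hχ01 : ∀ s, χ s ∈ Icc (0 : ℝ) 1)
    (hχ0 : ∀ s ∈ Icc (0 : ℝ) 1, infDist (H s c) Ω ≤ δ + ρ → χ s = 0) :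
    IsSymmHomotopy n Ω δ γ h a d
      (fun s t ↦ H s (min t c) + χ s • (γ (max t c) - γ c)) where
  continuousOn := by
    have hHmin : ContinuousOn (fun q : ℝ × ℝ ↦ H q.1 (min q.2 c)) (Icc 0 1 ×ˢ Icc a d) :=
      hH.continuousOn.comp (f := fun q : ℝ × ℝ ↦ (q.1, min q.2 c)) (by fun_prop)
        fun q hq ↦ ⟨hq.1, le_min hq.2.1 hac, min_le_right _ _⟩
    have hγmax : ContinuousOn (fun q : ℝ × ℝ ↦ γ (max q.2 c)) (Icc 0 1 ×ˢ Icc a d) :=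
      hγ.comp (f := fun q : ℝ × ℝ ↦ max q.2 c) (by fun_prop)
        fun q hq ↦ ⟨le_max_right _ _, max_le hq.2.2 hcd⟩
    have hχfst : ContinuousOn (fun q : ℝ × ℝ ↦ χ q.1) (Icc 0 1 ×ˢ Icc a d) :=
      hχ.contDiffOn.continuousOn.comp continuousOn_fst fun _ hq ↦ hq.1
    exact hHmin.add (hχfst.smul (hγmax.sub continuousOn_const))
  initial s := by
    simp only [min_eq_left hac, max_eq_right hac, sub_self, smul_zero, add_zero, hH.initial]
  isSymmPath t ht := by
    rcases le_total t c with htc | hct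
    · simpa only [min_eq_left htc, max_eq_right htc, sub_self, smul_zero, add_zero]
        using hH.isSymmPath t ⟨ht.1, htc⟩
    · simpa only [min_eq_right hct, max_eq_left hct, add_sub_cancel]
        using (hH.isSymmPath c (right_mem_Icc.2 hac)).add_smul hχ (γ t - γ c)
  le_infDist s hs t ht := by
    rcases le_total t c with htc | hct
    · simpa only [min_eq_left htc, max_eq_right htc, sub_self, smul_zero, add_zero]
        using hH.le_infDist s hs t ⟨ht.1, htc⟩
    · simp only [min_eq_right hct, max_eq_left hct]
      exact le_infDist_add_smul (hχ01 s) ((dist_eq_norm _ _).ge.trans (hγρ t ⟨hct, ht.2⟩))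
        (hH.le_infDist s hs c (right_mem_Icc.2 hac)) (hχ0 s hs)

end IsSymmHomotopy

end SymmPath

open scoped Pointwise in
theorem stmt10_general {E : Type*} [NormedAddCommGroup E] [NormedSpace ℝ E] {n : ℕ∞} {Ω : Set E}
    (hΩ : Ω + Ω ⊆ Ω) {δ δ' : ℝ} (hδ : 0 < δ) (hδδ' : δ' < δ / 2) {a b : ℝ} (hab : a ≤ b)
    {γ : ℝ → E} (hγ : ContinuousOn γ (Icc a b)) (hγΩ : ∀ t ∈ Icc a b, δ ≤ infDist (γ t) Ω)
    {h : ℝ → E} (hh : IsSymmPath n (γ a) h)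
    (hhΩ : ∀ s ∈ Icc (0 : ℝ) 1, δ' ≤ infDist (h s) Ω) :
    ∃ H, IsSymmHomotopy n Ω δ' γ h a b H := by
  obtain ⟨ρ, hρ, hρδ⟩ : ∃ ρ > 0, 2 * (δ' + ρ) < δ := ⟨(δ / 2 - δ') / 2, by linarith, by linarith⟩
  obtain ⟨ε, hε, hγε⟩ := uniformContinuousOn_iff_le.1
    (isCompact_Icc.uniformContinuousOn_of_continuous hγ) ρ hρ
  refine induction_of_le_add_step (P := fun c ↦ ∃ H, IsSymmHomotopy n Ω δ' γ h a c H) hab hε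
    ⟨_, .const hh hhΩ⟩ ?_
  rintro c hc d hd hdε ⟨H, hH⟩
  have hγc : δ ≤ infDist (γ c) Ω := hγΩ c hc
  obtain ⟨χ, hχ, hχ01, hχ0⟩ := (hH.isSymmPath c (right_mem_Icc.2 hc.1)).exists_weight hΩ
    (hδ.trans_le hγc) (hρδ.trans_le hγc)
  refine ⟨_, hH.extend hc.1 hd.1 (hγ.mono (Icc_subset_Icc hc.1 hd.2)) (fun t ht ↦ ?_) hχ hχ01 hχ0⟩
  refine hγε t ⟨hc.1.trans ht.1, ht.2.trans hd.2⟩ c hc ?_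
  rw [Real.dist_eq, abs_of_nonneg (sub_nonneg.2 ht.1)]
  linarith [ht.2]

theorem PiecewiseC1On.of_contDiffOn {γ : ℝ → ℂ} {a b : ℝ} (hab : a ≤ b)
    (hγ : ContDiffOn ℝ 1 γ (Icc a b)) : PiecewiseC1On γ a b := by
  refine ⟨hγ.continuousOn, 1, fun i ↦ if i = 0 then a else b, rfl, rfl, fun i hi ↦ ?_,
    fun i hi ↦ ?_⟩
  all_goals obtain rfl : i = 0 := Nat.lt_one_iff.1 hi
  · exact hab
  · exact hγ

theorem IsSymmHomotopy.symmOmegaHomotopy {Ω : Set ℂ} {δ a b : ℝ} {γ h : ℝ → ℂ} {H : ℝ → ℝ → ℂ}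
    (hδ : 0 < δ) (hH : IsSymmHomotopy 1 Ω δ γ h a b H) : SymmOmegaHomotopy Ω H a b := by
  refine ⟨hH.continuousOn, fun t ht ↦ ?_⟩
  have hp := hH.isSymmPath t ht
  refine ⟨.of_contDiffOn zero_le_one hp.contDiffOn, hp.map_zero, fun s hs hmem ↦ ?_, fun s hs ↦ ?_⟩
  · exact (hδ.trans_le (hH.le_infDist s ⟨hs.1.le, hs.2⟩ t ht)).ne' (infDist_zero_of_mem hmem)
  · rw [hH.map_one ht, ← hp.symm s hs, add_sub_cancel_left]

/-- **Lemma (sublemkey).** Suppose `Ω` is stable under addition and `0 ∉ Ω`.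
Given `0 < δ' < δ/2`, a path `γ : [a,b] → ℂ` avoiding `0` and at distance `≥ δ`
from `Ω`, and a `C¹` symmetric initial path `h` at distance `≥ δ'` from `Ω` with
`h 1 = γ a`, there is a symmetric `Ω`-homotopy on `[0,1]×[a,b]` with initial path
`h`, endpoint path `γ`, image at distance `≥ δ'` from `Ω`, and `C¹` final path. -/
theorem stmt10 (Ω : Set ℂ) (hne : Ω.Nonempty) (hcl : IsClosed Ω)
    (hdisc : DiscreteTopology Ω)
    (hadd : ∀ ω₁ ∈ Ω, ∀ ω₂ ∈ Ω, ω₁ + ω₂ ∈ Ω) (h0 : (0:ℂ) ∉ Ω)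
    (δ δ' : ℝ) (hδ : 0 < δ) (hδ' : 0 < δ') (hδδ' : δ' < δ / 2)
    (a b : ℝ) (hab : a ≤ b)
    (γ : ℝ → ℂ) (hγ : PiecewiseC1On γ a b)
    (hγ0 : ∀ t ∈ Set.Icc a b, γ t ≠ 0)
    (hγΩ : ∀ t ∈ Set.Icc a b, δ ≤ Metric.infDist (γ t) Ω)
    (h : ℝ → ℂ) (hhC1 : ContDiffOn ℝ 1 h (Set.Icc 0 1))
    (hh0 : h 0 = 0)
    (hhΩ : ∀ s ∈ Set.Icc (0:ℝ) 1, δ' ≤ Metric.infDist (h s) Ω)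
    (hhsym : ∀ s ∈ Set.Icc (0:ℝ) 1, h (1 - s) = h 1 - h s)
    (hh1 : h 1 = γ a) :
    ∃ H : ℝ → ℝ → ℂ, SymmOmegaHomotopy Ω H a b ∧
      (∀ s ∈ Set.Icc (0:ℝ) 1, H s a = h s) ∧
      (∀ t ∈ Set.Icc a b, H 1 t = γ t) ∧
      (∀ s ∈ Set.Icc (0:ℝ) 1, ∀ t ∈ Set.Icc a b, δ' ≤ Metric.infDist (H s t) Ω) ∧
      ContDiffOn ℝ 1 (fun s => H s b) (Set.Icc 0 1) := by
  have hh : IsSymmPath 1 (γ a) h :=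
    ⟨hhC1, hh0, fun s hs ↦ by rw [hhsym s hs, hh1, add_sub_cancel]⟩
  obtain ⟨H, hH⟩ := stmt10_general (Set.add_subset_iff.2 hadd) hδ hδδ' hab hγ.1 hγΩ hh hhΩ
  exact ⟨H, hH.symmOmegaHomotopy hδ', fun s _ ↦ hH.initial s, fun _ ↦ hH.map_one, hH.le_infDist,
    (hH.isSymmPath b (right_mem_Icc.2 hab)).contDiffOn⟩
end
end

section
/- Let ω₁, ω₂ ∈ ℂ∖{0} and set ω := ω₁ + ω₂. If the line segment [0,ω] contains neither ω₁ nor ω₂ (equivalently, ω belongs to the cut plane Δ = ℂ ∖ (ω₁·[1,∞) ∪ ω₂·[1,∞))), then ∫₀^ω dξ/(ξ−ω₁) + ∫₀^ω dξ/(ξ−ω₂) = 0, where the integrals are taken over the segment [0,ω]. Consequently the meromorphic continuation to Δ of the convolution (1/(ζ−ω₁)) * (1/(ζ−ω₂)) = (L₁(ζ)+L₂(ζ))/(ζ−ω) has a removable singularity at ζ = ω. -/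
open Set Metric Filter Topology intervalIntegral

noncomputable section

/-!
The substitution `ξ ↦ ω - ξ` reverses the segment `[0, ω]` and exchanges the poles `ω₁` and
`ω₂ = ω - ω₁`, so the two integrals at `ω` are opposite. Off the cut through `ω_j`, the integral
`L_j` is the principal branch `log (1 - ζ / ω_j)`; hence `L₁ + L₂` is analytic near `ω` and
vanishes there, and dividing by `ζ - ω` leaves only a removable singularity.
-/

/-- The function `L(ζ) = ∫₀^ζ dξ/(ξ - a)` attached to the pole `a`, the integral being taken over
the segment `[0, ζ]`, parametrised as `ξ = t ζ`. Its value is junk when `a` lies on the segment. -/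
def segmentLog (a ζ : ℂ) : ℂ :=
  ∫ t in (0 : ℝ)..1, ((t : ℂ) * ζ - a)⁻¹ * ζ

theorem segmentLog_sub_left (a ζ : ℂ) : segmentLog (ζ - a) ζ = -segmentLog a ζ := by
  have reflect (t : ℝ) :
      ((t : ℂ) * ζ - (ζ - a))⁻¹ * ζ = -((((1 - t : ℝ) : ℂ) * ζ - a)⁻¹ * ζ) := by
    rw [← neg_mul, ← inv_neg]
    congr 2
    push_cast
    ring
  simp only [segmentLog, reflect, intervalIntegral.integral_neg]
  rw [integral_comp_sub_left (fun t : ℝ => ((t : ℂ) * ζ - a)⁻¹ * ζ) 1, sub_self, sub_zero]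

theorem segmentLog_eq_log {a ζ : ℂ} (ha : a ≠ 0) (hζ : 1 - ζ / a ∈ Complex.slitPlane) :
    segmentLog a ζ = Complex.log (1 - ζ / a) := by
  have integrand_eq (t : ℝ) :
      ((t : ℂ) * ζ - a)⁻¹ * ζ = -(ζ / a * (1 - t • (ζ / a))⁻¹) := by
    have factor : (t : ℂ) * ζ - a = -(a * (1 - t • (ζ / a))) := by
      rw [Complex.real_smul]
      field_simp
      ring
    rw [factor, inv_neg, mul_inv]
    ring
  calc segmentLog a ζ
      = -(ζ / a * ∫ t in (0 : ℝ)..1, (1 - t • (ζ / a))⁻¹) := by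
        simp only [segmentLog, integrand_eq, intervalIntegral.integral_neg,
          intervalIntegral.integral_const_mul]
    _ = -Complex.log (1 - ζ / a)⁻¹ := by rw [Complex.log_inv_eq_integral hζ]
    _ = Complex.log (1 - ζ / a) := by
        rw [Complex.log_inv _ (Complex.slitPlane_arg_ne_pi hζ), neg_neg]

theorem mem_segment_zero_iff {𝕜 E : Type*} [Ring 𝕜] [PartialOrder 𝕜] [AddRightMono 𝕜]
    [AddCommGroup E] [Module 𝕜 E] {x y : E} :
    x ∈ segment 𝕜 0 y ↔ ∃ t ∈ Icc (0 : 𝕜) 1, t • y = x := by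
  simp only [segment_eq_image, smul_zero, zero_add, mem_image]

theorem one_sub_div_mem_slitPlane {a ζ : ℂ} (ha : a ∉ segment ℝ 0 ζ) :
    1 - ζ / a ∈ Complex.slitPlane := by
  have ha₀ : a ≠ 0 := fun h => ha (h ▸ left_mem_segment ℝ 0 ζ)
  contrapose! ha
  obtain ⟨hre, him⟩ : 1 ≤ (ζ / a).re ∧ (ζ / a).im = 0 := by
    simpa [Complex.mem_slitPlane_iff] using ha
  have hζ : ζ = (ζ / a).re • a := by
    rw [Complex.real_smul, Complex.conj_eq_iff_re.mp (Complex.conj_eq_iff_im.mpr him),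
      div_mul_cancel₀ ζ ha₀]
  refine mem_segment_zero_iff.mpr
    ⟨(ζ / a).re⁻¹, ⟨inv_nonneg.mpr (zero_le_one.trans hre), inv_le_one_of_one_le₀ hre⟩, ?_⟩
  exact (inv_smul_eq_iff₀ (zero_lt_one.trans_le hre).ne').mpr hζ

theorem analyticAt_segmentLog {a ζ : ℂ} (ha : a ∉ segment ℝ 0 ζ) :
    AnalyticAt ℂ (segmentLog a) ζ := by
  have ha₀ : a ≠ 0 := fun h => ha (h ▸ left_mem_segment ℝ 0 ζ)
  have hζ : 1 - ζ / a ∈ Complex.slitPlane := one_sub_div_mem_slitPlane ha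
  have hlin : AnalyticAt ℂ (fun z => 1 - z / a) ζ := by fun_prop (disch := assumption)
  refine (hlin.clog hζ).congr ?_
  filter_upwards [hlin.continuousAt.eventually (Complex.isOpen_slitPlane.mem_nhds hζ)] with z hz
  exact (segmentLog_eq_log ha₀ hz).symm

theorem exists_analyticAt_eventually_inv_sub_smul_eq {𝕜 E : Type*} [NontriviallyNormedField 𝕜]
    [NormedAddCommGroup E] [NormedSpace 𝕜 E] {f : 𝕜 → E} {z₀ : 𝕜} (hf : AnalyticAt 𝕜 f z₀)
    (hf₀ : f z₀ = 0) :
    ∃ g : 𝕜 → E, AnalyticAt 𝕜 g z₀ ∧ ∀ᶠ z in 𝓝[≠] z₀, (z - z₀)⁻¹ • f z = g z := by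
  obtain ⟨p, hp⟩ := hf
  refine ⟨dslope f z₀, hp.has_fpower_series_dslope_fslope.analyticAt, ?_⟩
  filter_upwards [self_mem_nhdsWithin] with z hz
  rw [dslope_of_ne f hz, slope_def_module, hf₀, sub_zero]

/-- If the segment `[0, ω₁+ω₂]` contains neither `ω₁` nor `ω₂`, then
`∫₀^ω dξ/(ξ-ω₁) + ∫₀^ω dξ/(ξ-ω₂) = 0` (integrals over the segment, `ω = ω₁+ω₂`);
consequently the meromorphic function `(L₁(ζ)+L₂(ζ))/(ζ-ω)` — the meromorphic
continuation of the convolution `1/(ζ-ω₁) ⋆ 1/(ζ-ω₂)` to the cut plane — has a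
removable singularity at `ζ = ω`. -/
theorem stmt15 (ω₁ ω₂ : ℂ) (h₁ : ω₁ ≠ 0) (h₂ : ω₂ ≠ 0)
    (hseg : ∀ t ∈ Set.Icc (0:ℝ) 1,
      (t : ℂ) * (ω₁ + ω₂) ≠ ω₁ ∧ (t : ℂ) * (ω₁ + ω₂) ≠ ω₂) :
    ((∫ t in (0:ℝ)..1, ((t : ℂ) * (ω₁ + ω₂) - ω₁)⁻¹ * (ω₁ + ω₂))
      + ∫ t in (0:ℝ)..1, ((t : ℂ) * (ω₁ + ω₂) - ω₂)⁻¹ * (ω₁ + ω₂)) = 0 ∧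
    ∃ g : ℂ → ℂ, AnalyticAt ℂ g (ω₁ + ω₂) ∧
      ∀ᶠ ζ in 𝓝[{(ω₁ + ω₂)}ᶜ] (ω₁ + ω₂),
        ((∫ t in (0:ℝ)..1, ((t : ℂ) * ζ - ω₁)⁻¹ * ζ)
          + ∫ t in (0:ℝ)..1, ((t : ℂ) * ζ - ω₂)⁻¹ * ζ) / (ζ - ω₁ - ω₂) = g ζ := by
  have hω₁ : ω₁ ∉ segment ℝ 0 (ω₁ + ω₂) := by
    intro h
    obtain ⟨t, ht, hteq⟩ := mem_segment_zero_iff.mp h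
    exact (hseg t ht).1 hteq
  have hω₂ : ω₂ ∉ segment ℝ 0 (ω₁ + ω₂) := by
    intro h
    obtain ⟨t, ht, hteq⟩ := mem_segment_zero_iff.mp h
    exact (hseg t ht).2 hteq
  have hzero : segmentLog ω₁ (ω₁ + ω₂) + segmentLog ω₂ (ω₁ + ω₂) = 0 := by
    have h := segmentLog_sub_left ω₁ (ω₁ + ω₂)
    rw [add_sub_cancel_left] at h
    rw [h, add_neg_cancel]
  obtain ⟨g, hg, hg_eq⟩ := exists_analyticAt_eventually_inv_sub_smul_eq
    ((analyticAt_segmentLog hω₁).add (analyticAt_segmentLog hω₂)) hzero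
  refine ⟨hzero, g, hg, hg_eq.mono fun ζ hζ => ?_⟩
  rw [← hζ, smul_eq_mul, inv_mul_eq_div, ← sub_sub]
  rfl
end
end

section
/- Let θ ∈ ℝ and r₁, r₂ > 0, set ω₁ = r₁e^{iθ}, ω₂ = r₂e^{iθ} and ω = ω₁ + ω₂. Let γ₀ be the path from 0 to ω which follows the segment [0,ω] except that it circumvents ω₁ and ω₂ by half-circles of sufficiently small radius travelled anti-clockwise. Then ∫_{γ₀} dξ/(ξ−ω₁) = log(r₂/r₁) + iπ, ∫_{γ₀} dξ/(ξ−ω₂) = log(r₁/r₂) + iπ, and hence ∫_{γ₀} (1/(ξ−ω₁) + 1/(ξ−ω₂)) dξ = 2πi. -/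
open Set Metric Filter Topology intervalIntegral

noncomputable section

/-- The path from `0` to `(r₁+r₂)e^{iθ}`, parametrised by `x ∈ [0, r₁+r₂]`, which
follows the segment `[0, (r₁+r₂)e^{iθ}]` except that it circumvents the points
`ω₁ = r₁e^{iθ}` and `ω₂ = r₂e^{iθ}` by half-circles of radius `ε` travelled
anti-clockwise. -/
def circumventPath (r₁ r₂ ε θ : ℝ) (x : ℝ) : ℂ :=
  if |x - r₁| < ε then
    (r₁ : ℂ) * Complex.exp (θ * Complex.I)
      + (ε : ℂ) * Complex.exp (θ * Complex.I)
          * Complex.exp (Real.pi * Complex.I * (1 + ((x - r₁ + ε) / (2 * ε) : ℝ)))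
  else if |x - r₂| < ε then
    (r₂ : ℂ) * Complex.exp (θ * Complex.I)
      + (ε : ℂ) * Complex.exp (θ * Complex.I)
          * Complex.exp (Real.pi * Complex.I * (1 + ((x - r₂ + ε) / (2 * ε) : ℝ)))
  else (x : ℂ) * Complex.exp (θ * Complex.I)

/-!
After division by `e^{iθ}` the path is the real line with a lower half-circle around each of `r₁`
and `r₂`. It never meets the closed vertical ray going up from `r₁` or from `r₂`, so for `c = r₁`
and `c = r₂` multiplication by `i` carries `ξ - c` into the slit plane, where the principal
logarithm is a primitive of `dz / z`. Both integrals are thus differences of logarithms at the end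
points, and `log (i (r₁ + r₂ - c)) - log (-i c) = log ((r₁ + r₂ - c) / c) + iπ`.
-/

section

open Complex MeasureTheory
open scoped Real

theorem log_I_mul_ofReal_of_pos {x : ℝ} (hx : 0 < x) : log (I * x) = Real.log x + π / 2 * I := by
  rw [mul_comm, log_ofReal_mul hx I_ne_zero, log_I]

theorem log_I_mul_ofReal_of_neg {x : ℝ} (hx : x < 0) :
    log (I * x) = Real.log (-x) - π / 2 * I := by
  rw [show I * (x : ℂ) = ((-x : ℝ) : ℂ) * -I by push_cast; ring,
    log_ofReal_mul (neg_pos.2 hx) (neg_ne_zero.2 I_ne_zero), log_neg_I]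
  ring

section LogDeriv

variable {𝕜 : Type*} [NontriviallyNormedField 𝕜] [NormedAlgebra ℝ 𝕜] {f : ℝ → 𝕜} {a b : ℝ}

theorem logDeriv_const_mul_sub_const {u : 𝕜} (hu : u ≠ 0) (w : 𝕜) (x : ℝ) :
    logDeriv (fun t => u * (f t - w)) x = (f x - w)⁻¹ * deriv f x := by
  rw [logDeriv_const_mul _ _ hu, logDeriv_apply, deriv_sub_const, div_eq_inv_mul]

theorem intervalIntegrable_logDeriv (hcont : ContinuousOn f (uIcc a b))
    (hne : ∀ x ∈ uIcc a b, f x ≠ 0) (hint : IntervalIntegrable (deriv f) volume a b) :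
    IntervalIntegrable (logDeriv f) volume a b := by
  rw [logDeriv, div_eq_mul_inv]
  exact hint.mul_continuousOn (hcont.inv₀ hne)

theorem integral_logDeriv_of_mem_slitPlane {f : ℝ → ℂ} {s : Set ℝ} (hs : s.Countable)
    (hcont : ContinuousOn f (uIcc a b))
    (hdiff : ∀ x ∈ Ioo (min a b) (max a b) \ s, DifferentiableAt ℝ f x)
    (hint : IntervalIntegrable (deriv f) volume a b) (hslit : ∀ x ∈ uIcc a b, f x ∈ slitPlane) :
    ∫ x in a..b, logDeriv f x = log (f b) - log (f a) := by
  refine integral_eq_of_hasDerivAt_off_countable (fun x => log (f x)) _ hs (hcont.clog hslit) ?_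
    (intervalIntegrable_logDeriv hcont (fun x hx => slitPlane_ne_zero (hslit x hx)) hint)
  exact fun x hx => (hdiff x hx).hasDerivAt.clog_real (hslit x (Ioo_subset_Icc_self hx.1))

end LogDeriv

/-- The displacement from the real line to the lower half-circle of radius `ε` centred at `0`,
which is travelled anti-clockwise from `-ε` to `ε` while `y` runs through `[-ε, ε]`. Working with
the displacement makes the effects of several indentations additive. -/
def indentation (ε y : ℝ) : ℂ :=
  if |y| < ε then circleMap 0 ε (π * (1 + (y + ε) / (2 * ε))) - y else 0

/-- The real line indented by lower half-circles of radius `ε` around the points of `C`. This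
describes the intended path only if the half-circles do not overlap. -/
def indentedLine (C : Finset ℝ) (ε x : ℝ) : ℂ :=
  x + ∑ c ∈ C, indentation ε (x - c)

section Indentation

variable {ε y : ℝ}

theorem indentation_of_abs_lt (hy : |y| < ε) :
    indentation ε y = circleMap 0 ε (π * (1 + (y + ε) / (2 * ε))) - y :=
  if_pos hy

theorem indentation_of_le_abs (hy : ε ≤ |y|) : indentation ε y = 0 :=
  if_neg hy.not_gt

theorem continuous_indentation (hε : 0 < ε) : Continuous (indentation ε) := by
  refine Continuous.if (fun y hy => ?_) (by fun_prop) continuous_const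
  rcases eq_or_eq_neg_of_abs_eq (frontier_lt_subset_eq continuous_abs continuous_const hy)
    with rfl | rfl
  · have angle_eq : π * (1 + (y + y) / (2 * y)) = 2 * π := by field_simp; norm_num
    simp [angle_eq, circleMap]
  · simp [circleMap]

theorem indentation_im_neg (hy : |y| < ε) : (indentation ε y).im < 0 := by
  have hε : 0 < ε := (abs_nonneg y).trans_lt hy
  obtain ⟨hlo, hhi⟩ := abs_lt.1 hy
  have ht₀ : 0 < (y + ε) / (2 * ε) := div_pos (by linarith) (by linarith)
  have ht₁ : (y + ε) / (2 * ε) < 1 := (div_lt_one (by linarith)).2 (by linarith)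
  have hsin : 0 < Real.sin (π * ((y + ε) / (2 * ε))) :=
    Real.sin_pos_of_pos_of_lt_pi (by positivity) (mul_lt_of_lt_one_right Real.pi_pos ht₁)
  rw [indentation_of_abs_lt hy, sub_im, circleMap_zero_im, ofReal_im, mul_one_add, add_comm π,
    Real.sin_add_pi, sub_zero, mul_neg, neg_lt_zero]
  positivity

theorem indentation_im_nonpos : (indentation ε y).im ≤ 0 := by
  rcases lt_or_ge |y| ε with hy | hy
  · exact (indentation_im_neg hy).le
  · simp [indentation_of_le_abs hy]

theorem hasDerivAt_indentation_of_abs_lt (hy : |y| < ε) :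
    HasDerivAt (indentation ε)
      ((π / (2 * ε)) • (circleMap 0 ε (π * (1 + (y + ε) / (2 * ε))) * I) - 1) y := by
  have hangle : HasDerivAt (fun z => π * (1 + (z + ε) / (2 * ε))) (π / (2 * ε)) y := by
    simpa only [mul_one_div, id] using
      ((((hasDerivAt_id y).add_const ε).div_const (2 * ε)).const_add 1).const_mul π
  have harc := ((hasDerivAt_circleMap 0 ε _).scomp y hangle).sub (hasDerivAt_id y).ofReal_comp
  rw [ofReal_one] at harc
  refine harc.congr_of_eventuallyEq ?_
  filter_upwards [continuous_abs.continuousAt.eventually_lt_const hy] with z hz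
  exact indentation_of_abs_lt hz

theorem hasDerivAt_indentation_of_lt_abs (hy : ε < |y|) : HasDerivAt (indentation ε) 0 y := by
  refine (hasDerivAt_const y (0 : ℂ)).congr_of_eventuallyEq ?_
  filter_upwards [continuous_abs.continuousAt.eventually_const_lt hy] with z hz
  exact indentation_of_le_abs hz.le

theorem differentiableAt_indentation (hy : |y| ≠ ε) : DifferentiableAt ℝ (indentation ε) y :=
  hy.lt_or_gt.elim (fun h => (hasDerivAt_indentation_of_abs_lt h).differentiableAt)
    (fun h => (hasDerivAt_indentation_of_lt_abs h).differentiableAt)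

theorem norm_deriv_indentation_le (hy : |y| ≠ ε) : ‖deriv (indentation ε) y‖ ≤ π / 2 + 1 := by
  rcases hy.lt_or_gt with hlt | hgt
  · have hε : 0 < ε := (abs_nonneg y).trans_lt hlt
    rw [(hasDerivAt_indentation_of_abs_lt hlt).deriv]
    refine (norm_sub_le _ _).trans_eq ?_
    rw [norm_smul, norm_mul, norm_circleMap_zero, norm_I, norm_one, abs_of_pos hε,
      Real.norm_of_nonneg (by positivity)]
    field_simp
  · rw [(hasDerivAt_indentation_of_lt_abs hgt).deriv, norm_zero]
    positivity

theorem countable_sphere_real (c ε : ℝ) : (sphere c ε).Countable := by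
  rcases lt_or_ge ε 0 with hε | hε
  · simp [sphere_eq_empty_of_neg hε]
  · simp [Real.sphere_eq_pair c hε]

theorem intervalIntegrable_deriv_indentation (ε a b : ℝ) :
    IntervalIntegrable (deriv (indentation ε)) volume a b := by
  refine (intervalIntegrable_const (c := π / 2 + 1)).mono_fun'
    (measurable_deriv _).aestronglyMeasurable (ae_restrict_of_ae ?_)
  filter_upwards [(countable_sphere_real 0 ε).ae_notMem volume] with y hy
  exact norm_deriv_indentation_le (by simpa using hy)

end Indentation

section IndentedLine

variable {C : Finset ℝ} {ε a b c x : ℝ}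

theorem indentedLine_of_forall_le_abs_sub (hx : ∀ c ∈ C, ε ≤ |x - c|) :
    indentedLine C ε x = x := by
  rw [indentedLine, Finset.sum_eq_zero fun c hc => indentation_of_le_abs (hx c hc), add_zero]

theorem indentedLine_of_abs_sub_lt (hC : (C : Set ℝ).Pairwise fun c d => 2 * ε ≤ |c - d|)
    (hc : c ∈ C) (hx : |x - c| < ε) :
    indentedLine C ε x = circleMap c ε (π * (1 + (x - c + ε) / (2 * ε))) := by
  have hother : ∀ d ∈ C, d ≠ c → indentation ε (x - d) = 0 := fun d hd hdc => by
    refine indentation_of_le_abs ?_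
    linarith [hC hc hd hdc.symm, abs_sub_le c x d, abs_sub_comm c x]
  rw [indentedLine, Finset.sum_eq_single_of_mem c hc hother, indentation_of_abs_lt hx,
    ← circleMap_sub_center c]
  push_cast
  ring

theorem continuous_indentedLine (hε : 0 < ε) : Continuous (indentedLine C ε) := by
  have hcont := continuous_indentation hε
  unfold indentedLine
  fun_prop

theorem hasDerivAt_indentedLine (hx : ∀ c ∈ C, x ∉ sphere c ε) :
    HasDerivAt (indentedLine C ε) (1 + ∑ c ∈ C, deriv (indentation ε) (x - c)) x := by
  refine (hasDerivAt_id x).ofReal_comp.add (HasDerivAt.fun_sum fun c hc => ?_)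
  exact (differentiableAt_indentation (hx c hc)).hasDerivAt.comp_sub_const x c

theorem countable_biUnion_sphere (C : Finset ℝ) (ε : ℝ) : (⋃ c ∈ C, sphere c ε).Countable :=
  C.countable_toSet.biUnion fun c _ => countable_sphere_real c ε

theorem intervalIntegrable_deriv_indentedLine (C : Finset ℝ) (ε a b : ℝ) :
    IntervalIntegrable (deriv (indentedLine C ε)) volume a b := by
  have hsum : IntervalIntegrable (∑ c ∈ C, fun x => deriv (indentation ε) (x - c)) volume a b :=
    IntervalIntegrable.sum C fun c _ => by
      simpa using (intervalIntegrable_deriv_indentation ε (a - c) (b - c)).comp_sub_right c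
  refine ((intervalIntegrable_const (c := 1)).add hsum).congr_ae (ae_restrict_of_ae ?_)
  filter_upwards [(countable_biUnion_sphere C ε).ae_notMem volume] with x hx
  rw [(hasDerivAt_indentedLine (by simpa using hx)).deriv, Finset.sum_apply]

theorem I_mul_indentedLine_sub_mem_slitPlane (hε : 0 < ε) (hc : c ∈ C) (x : ℝ) :
    I * (indentedLine C ε x - c) ∈ slitPlane := by
  rw [mem_slitPlane_iff, I_mul_re, I_mul_im]
  by_cases hx : ∃ d ∈ C, |x - d| < ε
  · obtain ⟨d, hd, hxd⟩ := hx
    left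
    have him : ∑ d ∈ C, (indentation ε (x - d)).im < 0 :=
      Finset.sum_neg' (fun _ _ => indentation_im_nonpos) ⟨d, hd, indentation_im_neg hxd⟩
    simpa [indentedLine] using him
  · push Not at hx
    right
    have hxc : x - c ≠ 0 := abs_pos.1 (hε.trans_le (hx c hc))
    simpa [indentedLine_of_forall_le_abs_sub hx] using hxc

theorem differentiableAt_I_mul_indentedLine_sub (hx : ∀ c ∈ C, x ∉ sphere c ε) (w : ℂ) :
    DifferentiableAt ℝ (fun x => I * (indentedLine C ε x - w)) x :=
  ((hasDerivAt_indentedLine hx).differentiableAt.sub_const w).const_mul I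

theorem continuous_I_mul_indentedLine_sub (hε : 0 < ε) (w : ℂ) :
    Continuous fun x => I * (indentedLine C ε x - w) :=
  ((continuous_indentedLine hε).sub continuous_const).const_mul I

theorem intervalIntegrable_deriv_I_mul_indentedLine_sub (C : Finset ℝ) (ε : ℝ) (w : ℂ)
    (a b : ℝ) :
    IntervalIntegrable (deriv fun x => I * (indentedLine C ε x - w)) volume a b := by
  simpa only [deriv_const_mul_field', deriv_sub_const_fun] using
    (intervalIntegrable_deriv_indentedLine C ε a b).const_mul I

theorem intervalIntegrable_logDeriv_indentedLine (hε : 0 < ε) (hc : c ∈ C) (a b : ℝ) :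
    IntervalIntegrable (logDeriv fun x => I * (indentedLine C ε x - c)) volume a b :=
  intervalIntegrable_logDeriv (continuous_I_mul_indentedLine_sub hε c).continuousOn
    (fun x _ => slitPlane_ne_zero (I_mul_indentedLine_sub_mem_slitPlane hε hc x))
    (intervalIntegrable_deriv_I_mul_indentedLine_sub C ε c a b)

theorem integral_logDeriv_indentedLine (hε : 0 < ε) (hc : c ∈ C) (ha : ∀ d ∈ C, a + ε ≤ d)
    (hb : ∀ d ∈ C, d + ε ≤ b) :
    ∫ x in a..b, logDeriv (fun x => I * (indentedLine C ε x - c)) x =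
      Real.log ((b - c) / (c - a)) + π * I := by
  have hac : 0 < c - a := by linarith [ha c hc]
  have hbc : 0 < b - c := by linarith [hb c hc]
  have hstart : indentedLine C ε a = a := indentedLine_of_forall_le_abs_sub fun d hd =>
    le_abs.2 (.inr (by linarith [ha d hd]))
  have hend : indentedLine C ε b = b := indentedLine_of_forall_le_abs_sub fun d hd =>
    le_abs.2 (.inl (by linarith [hb d hd]))
  have hlog : ∫ x in a..b, logDeriv (fun x => I * (indentedLine C ε x - c)) x =
      log (I * (indentedLine C ε b - c)) - log (I * (indentedLine C ε a - c)) :=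
    integral_logDeriv_of_mem_slitPlane (countable_biUnion_sphere C ε)
      (continuous_I_mul_indentedLine_sub hε c).continuousOn
      (fun x hx => differentiableAt_I_mul_indentedLine_sub (by simpa using hx.2) c)
      (intervalIntegrable_deriv_I_mul_indentedLine_sub C ε c a b)
      (fun x _ => I_mul_indentedLine_sub_mem_slitPlane hε hc x)
  rw [hlog, hstart, hend, ← ofReal_sub, ← ofReal_sub, log_I_mul_ofReal_of_pos hbc,
    log_I_mul_ofReal_of_neg (by linarith), neg_sub, Real.log_div hbc.ne' hac.ne']
  push_cast
  ring

end IndentedLine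

section CircumventPath

variable {r₁ r₂ ε : ℝ}

theorem circumventPath_eq_mul_indentedLine (hsep : r₁ ≠ r₂ → 2 * ε ≤ |r₁ - r₂|) (θ : ℝ) :
    circumventPath r₁ r₂ ε θ = fun x => exp (θ * I) * indentedLine {r₁, r₂} ε x := by
  have hpair : (({r₁, r₂} : Finset ℝ) : Set ℝ).Pairwise fun c d => 2 * ε ≤ |c - d| := by
    rw [Finset.coe_pair, pairwise_pair]
    exact fun hne => ⟨hsep hne, abs_sub_comm r₁ r₂ ▸ hsep hne⟩
  funext x
  unfold circumventPath
  split_ifs with h₁ h₂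
  · rw [indentedLine_of_abs_sub_lt hpair (by simp) h₁, circleMap]
    push_cast
    ring_nf
  · rw [indentedLine_of_abs_sub_lt hpair (by simp) h₂, circleMap]
    push_cast
    ring_nf
  · rw [indentedLine_of_forall_le_abs_sub (by simpa using ⟨not_lt.1 h₁, not_lt.1 h₂⟩), mul_comm]

theorem inv_circumventPath_sub_mul_deriv (hsep : r₁ ≠ r₂ → 2 * ε ≤ |r₁ - r₂|) (θ c x : ℝ) :
    (circumventPath r₁ r₂ ε θ x - c * exp (θ * I))⁻¹ * deriv (circumventPath r₁ r₂ ε θ) x =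
      logDeriv (fun x => I * (indentedLine {r₁, r₂} ε x - c)) x := by
  have hrot : (fun x => I * (indentedLine {r₁, r₂} ε x - c)) = fun x =>
      I * (exp (θ * I))⁻¹ * (circumventPath r₁ r₂ ε θ x - c * exp (θ * I)) := by
    rw [circumventPath_eq_mul_indentedLine hsep]
    funext x
    field_simp [exp_ne_zero (θ * I)]
  rw [hrot, logDeriv_const_mul_sub_const (mul_ne_zero I_ne_zero (inv_ne_zero (exp_ne_zero _)))]

end CircumventPath

end

/-- With `ω₁ = r₁e^{iθ}`, `ω₂ = r₂e^{iθ}` and `γ₀` the path from `0` to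
`ω = ω₁+ω₂` circumventing `ω₁` and `ω₂` by small anti-clockwise half-circles,
one has `∫_{γ₀} dξ/(ξ-ω₁) = log(r₂/r₁) + iπ`, `∫_{γ₀} dξ/(ξ-ω₂) = log(r₁/r₂) + iπ`,
and hence `∫_{γ₀} (1/(ξ-ω₁) + 1/(ξ-ω₂)) dξ = 2πi`. -/
theorem stmt16 (θ r₁ r₂ ε : ℝ) (hr₁ : 0 < r₁) (hr₂ : 0 < r₂)
    (hε : 0 < ε) (hε₁ : ε < r₁) (hε₂ : ε < r₂)
    (hsep : r₁ ≠ r₂ → 2 * ε < |r₁ - r₂|) :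
    (∫ x in (0:ℝ)..(r₁ + r₂),
        (circumventPath r₁ r₂ ε θ x - (r₁ : ℂ) * Complex.exp (θ * Complex.I))⁻¹
          * deriv (circumventPath r₁ r₂ ε θ) x)
      = (Real.log (r₂ / r₁) : ℂ) + Real.pi * Complex.I ∧
    (∫ x in (0:ℝ)..(r₁ + r₂),
        (circumventPath r₁ r₂ ε θ x - (r₂ : ℂ) * Complex.exp (θ * Complex.I))⁻¹
          * deriv (circumventPath r₁ r₂ ε θ) x)
      = (Real.log (r₁ / r₂) : ℂ) + Real.pi * Complex.I ∧
    (∫ x in (0:ℝ)..(r₁ + r₂),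
        ((circumventPath r₁ r₂ ε θ x - (r₁ : ℂ) * Complex.exp (θ * Complex.I))⁻¹
          + (circumventPath r₁ r₂ ε θ x - (r₂ : ℂ) * Complex.exp (θ * Complex.I))⁻¹)
          * deriv (circumventPath r₁ r₂ ε θ) x)
      = 2 * Real.pi * Complex.I := by
  have hstart : ∀ d ∈ ({r₁, r₂} : Finset ℝ), 0 + ε ≤ d := by simp [hε₁.le, hε₂.le]
  have hend : ∀ d ∈ ({r₁, r₂} : Finset ℝ), d + ε ≤ r₁ + r₂ := by
    simp [hε₂.le, add_comm r₁, hε₁.le]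
  have hmem₁ : r₁ ∈ ({r₁, r₂} : Finset ℝ) := by simp
  have hmem₂ : r₂ ∈ ({r₁, r₂} : Finset ℝ) := by simp
  have hint₁ := integral_logDeriv_indentedLine hε hmem₁ hstart hend
  have hint₂ := integral_logDeriv_indentedLine hε hmem₂ hstart hend
  rw [add_sub_cancel_left, sub_zero] at hint₁
  rw [add_sub_cancel_right, sub_zero] at hint₂
  simp only [add_mul, inv_circumventPath_sub_mul_deriv fun h => (hsep h).le]
  refine ⟨hint₁, hint₂, ?_⟩
  rw [integral_add (intervalIntegrable_logDeriv_indentedLine hε hmem₁ _ _)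
    (intervalIntegrable_logDeriv_indentedLine hε hmem₂ _ _), hint₁, hint₂,
    Real.log_div hr₁.ne' hr₂.ne', Real.log_div hr₂.ne' hr₁.ne']
  push_cast
  ring
end
end

section
/- Let [a,b] be a compact interval, γ : [a,b] → ℂ a C¹ path, and X : ℂ × [a,b] → ℂ a non-autonomous vector field, continuous in (ζ,t) and locally Lipschitz in ζ, satisfying the symmetry relation X(γ(t)−ζ, t) = γ′(t) − X(ζ,t) for all ζ ∈ ℂ and t ∈ [a,b]. Then for any solution t ↦ ζ(t) of dζ/dt = X(ζ,t) on [a,b], the curve t ↦ ξ(t) := γ(t) − ζ(t) is also a solution of dξ/dt = X(ξ,t); consequently, denoting by Ψ_t := Φ^{a,t} the flow maps of X (assumed globally defined on [a,b]), one has Ψ_t(γ(a) − ζ) = γ(t) − Ψ_t(ζ) for all ζ ∈ ℂ and t ∈ [a,b]. -/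
open Set Metric Filter Topology

/-!
Since `X (γ t - ζ) t = γ' t - X ζ t`, differentiating `γ - φ` along a solution `φ` gives a solution
again. The curves `Φ (γ a - ζ)` and `γ - Φ ζ` are then two solutions with the same value at `a`,
and they agree on all of `[a, b]` by uniqueness for locally Lipschitz fields: Grönwall's inequality
shows that agreement at one time persists for a short while afterwards, and continuous induction on
the closed set of times of agreement reaches `b`.
-/

section LocallyLipschitzInSpace

variable {E : Type*} [PseudoMetricSpace E] {v : ℝ → E → E} {s : Set ℝ}

/-- A time-dependent vector field `v` is locally Lipschitz in the space variable over the set of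
times `s` if every `(t₀, x₀)` with `t₀ ∈ s` has a neighbourhood in `s × E` on which the maps `v t`
share a Lipschitz constant. This is the hypothesis under which solutions are unique; it does not
ask for any regularity of `v` in time. -/
def LocallyLipschitzInSpaceOn (v : ℝ → E → E) (s : Set ℝ) : Prop :=
  ∀ t₀ ∈ s, ∀ x₀ : E, ∃ K : NNReal, ∃ U ∈ 𝓝 x₀, ∀ᶠ t in 𝓝[s] t₀, LipschitzOnWith K (v t) U

theorem locallyLipschitzInSpaceOn_of_forall_ball
    (hv : ∀ x₀ : E, ∃ (K : NNReal) (ε : ℝ), 0 < ε ∧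
      ∀ t ∈ s, LipschitzOnWith K (v t) (ball x₀ ε)) :
    LocallyLipschitzInSpaceOn v s := by
  intro t₀ _ x₀
  obtain ⟨K, ε, hε, hK⟩ := hv x₀
  exact ⟨K, ball x₀ ε, ball_mem_nhds x₀ hε, eventually_mem_nhdsWithin.mono hK⟩

end LocallyLipschitzInSpace

section IntegralCurves

variable {E : Type*} [NormedAddCommGroup E] [NormedSpace ℝ E]
  {v : ℝ → E → E} {f g γ γ' : ℝ → E} {s : Set ℝ} {a b : ℝ}

theorem hasDerivWithinAt_Ici_of_isIntegralCurveOn_Icc (hf : IsIntegralCurveOn f v (Icc a b)) :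
    ∀ t ∈ Ico a b, HasDerivWithinAt f (v t (f t)) (Ici t) t := fun t ht =>
  (hf t (Ico_subset_Icc_self ht)).mono_of_mem_nhdsWithin (Icc_mem_nhdsGE_of_mem ht)

theorem eventuallyEq_nhdsGE_of_isIntegralCurveOn_Icc {K : NNReal} {U : Set E} (hab : a < b)
    (hU : U ∈ 𝓝 (f a)) (hv : ∀ᶠ t in 𝓝[≥] a, LipschitzOnWith K (v t) U)
    (hf : IsIntegralCurveOn f v (Icc a b)) (hg : IsIntegralCurveOn g v (Icc a b))
    (heq : f a = g a) : f =ᶠ[𝓝[≥] a] g := by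
  have eventually_mem : ∀ {h : ℝ → E}, IsIntegralCurveOn h v (Icc a b) → U ∈ 𝓝 (h a) →
      ∀ᶠ t in 𝓝[≥] a, h t ∈ U := by
    intro h hh hUa
    rw [← nhdsWithin_Icc_eq_nhdsGE hab]
    exact hh.continuousWithinAt (left_mem_Icc.2 hab.le) hUa
  have near : ∀ᶠ t in 𝓝[≥] a, LipschitzOnWith K (v t) U ∧ f t ∈ U ∧ g t ∈ U ∧ t ∈ Icc a b :=
    hv.and <| (eventually_mem hf hU).and <|
      (eventually_mem hg (heq ▸ hU)).and (Icc_mem_nhdsGE hab)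
  obtain ⟨c, hac, hc⟩ := mem_nhdsGE_iff_exists_Icc_subset.1 near
  have hsub : Icc a c ⊆ Icc a b := fun t ht => (hc ht).2.2.2
  have hnear : ∀ t ∈ Ico a c, LipschitzOnWith K (v t) U ∧ f t ∈ U ∧ g t ∈ U ∧ t ∈ Icc a b :=
    fun t ht => hc (Ico_subset_Icc_self ht)
  have heqOn : EqOn f g (Icc a c) :=
    ODE_solution_unique_of_mem_Icc_right (s := fun _ => U)
      (fun t ht => (hnear t ht).1)
      (hf.continuousOn.mono hsub) (hasDerivWithinAt_Ici_of_isIntegralCurveOn_Icc (hf.mono hsub))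
      (fun t ht => (hnear t ht).2.1)
      (hg.continuousOn.mono hsub) (hasDerivWithinAt_Ici_of_isIntegralCurveOn_Icc (hg.mono hsub))
      (fun t ht => (hnear t ht).2.2.1) heq
  exact heqOn.eventuallyEq_of_mem (Icc_mem_nhdsGE hac)

theorem eqOn_Icc_of_isIntegralCurveOn (hv : LocallyLipschitzInSpaceOn v (Icc a b))
    (hf : IsIntegralCurveOn f v (Icc a b)) (hg : IsIntegralCurveOn g v (Icc a b))
    (heq : f a = g a) : EqOn f g (Icc a b) := by
  have hclosed : IsClosed ({t | f t = g t} ∩ Icc a b) := by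
    rw [inter_comm]
    exact (hf.continuousOn.prodMk hg.continuousOn).preimage_isClosed_of_isClosed isClosed_Icc
      isClosed_diagonal
  refine hclosed.Icc_subset_of_forall_mem_nhdsWithin heq ?_
  rintro t ⟨hfgt, ht⟩
  obtain ⟨K, U, hU, hK⟩ := hv t (Ico_subset_Icc_self ht) (f t)
  have hsub : Icc t b ⊆ Icc a b := Icc_subset_Icc_left ht.1
  have hK' : ∀ᶠ τ in 𝓝[≥] t, LipschitzOnWith K (v τ) U := by
    rw [← nhdsWithin_Icc_eq_nhdsGE ht.2]
    exact hK.filter_mono (nhdsWithin_mono t hsub)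
  exact nhdsWithin_mono t Ioi_subset_Ici_self <|
    eventuallyEq_nhdsGE_of_isIntegralCurveOn_Icc ht.2 hU hK' (hf.mono hsub) (hg.mono hsub) hfgt

theorem isIntegralCurveOn_sub_of_reflection (hγ : ∀ t ∈ s, HasDerivWithinAt γ (γ' t) s t)
    (hsym : ∀ x, ∀ t ∈ s, v t (γ t - x) = γ' t - v t x) (hf : IsIntegralCurveOn f v s) :
    IsIntegralCurveOn (fun t => γ t - f t) v s := by
  intro t ht
  rw [hsym (f t) t ht]
  exact (hγ t ht).sub (hf t ht)

theorem stmt18_general (hγ : ∀ t ∈ Icc a b, HasDerivWithinAt γ (γ' t) (Icc a b) t)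
    (hv : LocallyLipschitzInSpaceOn v (Icc a b))
    (hsym : ∀ x, ∀ t ∈ Icc a b, v t (γ t - x) = γ' t - v t x)
    {Φ : E → ℝ → E} (hΦinit : ∀ x, Φ x a = x)
    (hΦsol : ∀ x, IsIntegralCurveOn (Φ x) v (Icc a b)) :
    (∀ φ : ℝ → E, IsIntegralCurveOn φ v (Icc a b) →
      IsIntegralCurveOn (fun t => γ t - φ t) v (Icc a b)) ∧
    (∀ x, EqOn (Φ (γ a - x)) (fun t => γ t - Φ x t) (Icc a b)) := by
  have hreflect : ∀ φ : ℝ → E, IsIntegralCurveOn φ v (Icc a b) →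
      IsIntegralCurveOn (fun t => γ t - φ t) v (Icc a b) :=
    fun _ => isIntegralCurveOn_sub_of_reflection hγ hsym
  have hinit : ∀ x, Φ (γ a - x) a = γ a - Φ x a := fun x => by rw [hΦinit, hΦinit]
  exact ⟨hreflect, fun x =>
    eqOn_Icc_of_isIntegralCurveOn hv (hΦsol _) (hreflect _ (hΦsol x)) (hinit x)⟩

end IntegralCurves

/-- If the non-autonomous vector field `X`, continuous in `(ζ,t)` and locally
Lipschitz in `ζ`, satisfies the symmetry relation
`X(γ(t)-ζ, t) = γ'(t) - X(ζ,t)` with respect to a `C¹` path `γ`, then for any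
solution `ζ(t)` of `X` the curve `γ(t) - ζ(t)` is again a solution; consequently,
the (globally defined) flow maps `Ψ_t = Φ^{a,t}` satisfy
`Ψ_t(γ(a) - ζ) = γ(t) - Ψ_t(ζ)`. -/
theorem stmt18 (a b : ℝ) (hab : a ≤ b) (γ γ' : ℝ → ℂ)
    (hγC1 : ContDiffOn ℝ 1 γ (Set.Icc a b))
    (hγ : ∀ t ∈ Set.Icc a b, HasDerivWithinAt γ (γ' t) (Set.Icc a b) t)
    (X : ℂ → ℝ → ℂ)
    (hcont : Continuous fun p : ℂ × ℝ => X p.1 p.2)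
    (hlip : ∀ ζ₀ : ℂ, ∃ (K : NNReal) (ε : ℝ), 0 < ε ∧
      ∀ t ∈ Set.Icc a b, LipschitzOnWith K (fun ζ => X ζ t) (Metric.ball ζ₀ ε))
    (hsym : ∀ ζ : ℂ, ∀ t ∈ Set.Icc a b, X (γ t - ζ) t = γ' t - X ζ t)
    (Φ : ℂ → ℝ → ℂ)
    (hΦinit : ∀ ζ : ℂ, Φ ζ a = ζ)
    (hΦsol : ∀ ζ : ℂ, ∀ t ∈ Set.Icc a b,
      HasDerivWithinAt (Φ ζ) (X (Φ ζ t) t) (Set.Icc a b) t) :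
    (∀ φ : ℝ → ℂ,
      (∀ t ∈ Set.Icc a b, HasDerivWithinAt φ (X (φ t) t) (Set.Icc a b) t) →
      ∀ t ∈ Set.Icc a b,
        HasDerivWithinAt (fun u => γ u - φ u) (X (γ t - φ t) t) (Set.Icc a b) t) ∧
    (∀ ζ : ℂ, ∀ t ∈ Set.Icc a b, Φ (γ a - ζ) t = γ t - Φ ζ t) :=
  stmt18_general (v := fun t ζ => X ζ t) hγ (locallyLipschitzInSpaceOn_of_forall_ball hlip)
    hsym hΦinit hΦsol
end
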